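/- For every instance (G,w) of the concurrent graph sharing game in which G is a tree, the first player can guarantee to take vertices of total weight at least 1/2; that is, v(G,w) ≥ 1/2. -/

import Mathlib

/-!
Formalization of the concurrent graph sharing game.

An instance is a finite connected simple graph `G` on a finite vertex type `V`
together with vertex weights `w : V → (0,1]` summing to `1`, such that no two
distinct subsets of vertices have the same total weight.

A game history is recorded as a list of the taken vertices, **most recent
first**.  The player-to-move at a history is determined by the history itself:
the first player (1st) moves when his collected weight so far is at most that
of the second player (2nd); by the distinct-subset-sums assumption a tie occurs
only at the empty history, where indeed 1st begins.  `scores w h` computes the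
pair `(w(F), w(S))` of total weights collected by 1st and 2nd along a history.

A strategy is a function from histories to the chosen next vertex; it is legal
if, whenever some legal move exists (a non-taken vertex that is adjacent to a
taken one, or any vertex at the very beginning), it produces a legal move.
`firstScore w σ τ` is the total weight collected by 1st after the complete play
(all `Fintype.card V` vertices taken) in which 1st uses `σ` and 2nd uses `τ`.

`FirstGuarantees G w c` says that 1st has a legal strategy guaranteeing that he
collects total weight at least `c` against every legal strategy of 2nd, and the
value `gameValue G w` is the supremum of all such guarantees `c`.
-/

namespace ConcurrentSharing

variable {V : Type} [Fintype V]

/-- The pair `(w(F), w(S))` of weights collected by the two players along a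
history (most recent vertex first): each vertex is assigned to the player who
was to move, namely 1st iff his score so far is at most 2nd's score. -/
noncomputable def scores (w : V → ℝ) : List V → ℝ × ℝ
  | [] => (0, 0)
  | v :: h =>
    let p := scores w h
    if p.1 ≤ p.2 then (p.1 + w v, p.2) else (p.1, p.2 + w v)

/-- `v` is a legal next move at history `h`: it is not yet taken, and it is
adjacent to some taken vertex (any vertex is legal at the start). -/
def LegalMove (G : SimpleGraph V) (h : List V) (v : V) : Prop :=
  v ∉ h ∧ (h = [] ∨ ∃ u ∈ h, G.Adj u v)

/-- A strategy (for either player) maps histories to vertices; it is legal if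
it produces a legal move whenever a legal move exists. -/
def LegalStrategy (G : SimpleGraph V) (σ : List V → V) : Prop :=
  ∀ h : List V, (∃ v, LegalMove G h v) → LegalMove G h (σ h)

/-- The history after `n` rounds when 1st plays `σ` and 2nd plays `τ`
(the player to move is the one whose collected weight so far is smaller;
at the start, i.e. on a tie, 1st moves). -/
noncomputable def playAux (w : V → ℝ) (σ τ : List V → V) : ℕ → List V
  | 0 => []
  | n + 1 =>
    let h := playAux w σ τ n
    (if (scores w h).1 ≤ (scores w h).2 then σ h else τ h) :: h

/-- The total weight `w(F)` collected by 1st at the end of the complete play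
(all vertices taken) in which 1st plays `σ` and 2nd plays `τ`. -/
noncomputable def firstScore (w : V → ℝ) (σ τ : List V → V) : ℝ :=
  (scores w (playAux w σ τ (Fintype.card V))).1

/-- 1st has a legal strategy collecting total weight at least `c` against
every legal strategy of 2nd. -/
def FirstGuarantees (G : SimpleGraph V) (w : V → ℝ) (c : ℝ) : Prop :=
  ∃ σ : List V → V, LegalStrategy G σ ∧
    ∀ τ : List V → V, LegalStrategy G τ → c ≤ firstScore w σ τ

/-- The value `v(G,w)`: the maximum total weight 1st can guarantee. -/
noncomputable def gameValue (G : SimpleGraph V) (w : V → ℝ) : ℝ :=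
  sSup {c : ℝ | FirstGuarantees G w c}

/-- `(G, w)` is an instance of the concurrent graph sharing game: `G` is
connected, the weights lie in `(0,1]` and sum to `1`, and no two distinct
subsets of vertices have the same total weight. -/
def IsGameInstance (G : SimpleGraph V) (w : V → ℝ) : Prop :=
  G.Connected ∧ (∀ v : V, 0 < w v ∧ w v ≤ 1) ∧ (∑ v : V, w v) = 1 ∧
    ∀ A B : Finset V, A ≠ B → ∑ a ∈ A, w a ≠ ∑ b ∈ B, w b

end ConcurrentSharing

namespace ConcurrentSharing

open Classical in
/-- Legality of a move in terms of the set of taken vertices. -/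
def SLegal {V : Type} (G : SimpleGraph V) (s : Finset V) (v : V) : Prop :=
  v ∉ s ∧ (s = ∅ ∨ ∃ u ∈ s, G.Adj u v)

open Classical in
/-- With `n` moves left, the player owning `a` (the opponent owns `b`) can force at least `1/2`. -/
def Win {V : Type} (G : SimpleGraph V) (w : V → ℝ) : ℕ → Finset V → ℝ → ℝ → Prop
  | 0, _, a, _ => 1 / 2 ≤ a
  | n + 1, s, a, b =>
    (a ≤ b → ∃ v, SLegal G s v ∧ Win G w n (insert v s) (a + w v) b) ∧
    (¬ a ≤ b → ∀ v, SLegal G s v → Win G w n (insert v s) a (b + w v))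

open Classical in
theorem win_symm {V : Type} [Fintype V] (G : SimpleGraph V) (w : V → ℝ)
    (hsum : ∑ v, w v = 1)
    (hd : ∀ A B : Finset V, A ≠ B → ∑ a ∈ A, w a ≠ ∑ b ∈ B, w b) (n : ℕ) :
    ∀ A B : Finset V, Disjoint A B → (A ∪ B).Nonempty → (A ∪ B).card + n = Fintype.card V →
      ¬ Win G w n (A ∪ B) (∑ a ∈ A, w a) (∑ b ∈ B, w b) →
      Win G w n (A ∪ B) (∑ b ∈ B, w b) (∑ a ∈ A, w a) := by
  induction n with
  | zero =>
    intro A B hAB _ hc hw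
    have hu : A ∪ B = Finset.univ := (Finset.card_eq_iff_eq_univ _).1 (by simpa using hc)
    have h1 := Finset.sum_union (f := w) hAB
    rw [hu, hsum] at h1
    simp only [Win] at *
    linarith
  | succ n ih =>
    intro A B hAB hne hc hw
    have hneq : A ≠ B := by
      rintro rfl
      have : A = ∅ := by simpa using hAB
      simp [this] at hne
    have hs := hd A B hneq
    -- adding a vertex to either side
    have addA : ∀ v, v ∉ A ∪ B →
        ¬ Win G w n (insert v (A ∪ B)) (∑ a ∈ A, w a + w v) (∑ b ∈ B, w b) →
        Win G w n (insert v (A ∪ B)) (∑ b ∈ B, w b) (∑ a ∈ A, w a + w v) := by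
      intro v hv h
      have hvA : v ∉ A := fun h => hv (Finset.mem_union_left _ h)
      have hvB : v ∉ B := fun h => hv (Finset.mem_union_right _ h)
      have e : insert v A ∪ B = insert v (A ∪ B) := Finset.insert_union _ _ _
      have := ih (insert v A) B (Finset.disjoint_insert_left.2 ⟨hvB, hAB⟩)
        (by rw [e]; exact Finset.insert_nonempty _ _)
        (by rw [e, Finset.card_insert_of_notMem hv]; omega)
      rw [e, Finset.sum_insert hvA, add_comm (w v)] at this
      exact this h
    have addB : ∀ v, v ∉ A ∪ B →
        ¬ Win G w n (insert v (A ∪ B)) (∑ a ∈ A, w a) (∑ b ∈ B, w b + w v) →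
        Win G w n (insert v (A ∪ B)) (∑ b ∈ B, w b + w v) (∑ a ∈ A, w a) := by
      intro v hv h
      have hvA : v ∉ A := fun h => hv (Finset.mem_union_left _ h)
      have hvB : v ∉ B := fun h => hv (Finset.mem_union_right _ h)
      have e : A ∪ insert v B = insert v (A ∪ B) := Finset.union_insert _ _ _
      have := ih A (insert v B) (Finset.disjoint_insert_right.2 ⟨hvA, hAB⟩)
        (by rw [e]; exact Finset.insert_nonempty _ _)
        (by rw [e, Finset.card_insert_of_notMem hv]; omega)
      rw [e, Finset.sum_insert hvB, add_comm (w v)] at this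
      exact this h
    rcases lt_or_gt_of_ne hs with hlt | hlt
    · refine ⟨fun h => absurd h (not_le.2 hlt), fun _ v hv => addA v hv.1 fun hcon => hw ?_⟩
      exact ⟨fun _ => ⟨v, hv, hcon⟩, fun h => absurd hlt.le h⟩
    · refine ⟨fun _ => ?_, fun h => absurd hlt.le h⟩
      by_contra hno
      push Not at hno
      refine hw ⟨fun h => absurd h (not_le.2 hlt), fun _ v hv => ?_⟩
      by_contra hcon
      exact hno v hv (addB v hv.1 hcon)

open Classical in
theorem exists_two_cycle {V : Type} [Fintype V] (G : SimpleGraph V) (ht : G.IsTree)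
    (f : V → V) (hf : ∀ v, G.Adj v (f v)) : ∃ u, f (f u) = u := by
  have hcard := ht.card_edgeFinset
  obtain ⟨x, _, y, _, hxy, h⟩ := Finset.exists_ne_map_eq_of_card_lt_of_maps_to
    (s := (Finset.univ : Finset V)) (t := G.edgeFinset) (f := fun v => s(v, f v))
    (by rw [Finset.card_univ]; omega) (by intro v _; simpa using hf v)
  rcases Sym2.eq_iff.1 h with ⟨h1, _⟩ | ⟨h1, h2⟩
  · exact absurd h1 hxy
  · exact ⟨x, by rw [h2, ← h1]⟩

open Classical in
theorem win_start {V : Type} [Fintype V] (G : SimpleGraph V) (w : V → ℝ)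
    (hG : IsGameInstance G w) (ht : G.IsTree) : Win G w (Fintype.card V) ∅ 0 0 := by
  obtain ⟨hconn, hpos, hsum, hd⟩ := hG
  haveI := hconn.nonempty
  obtain ⟨m, hm⟩ : ∃ m, Fintype.card V = m + 1 :=
    Nat.exists_eq_succ_of_ne_zero Fintype.card_ne_zero
  rw [hm]
  refine ⟨fun _ => ?_, fun h => absurd le_rfl h⟩
  by_contra hno
  push Not at hno
  have hno' : ∀ r, ¬ Win G w m {r} (w r) 0 := fun r => by
    simpa using hno r ⟨by simp, Or.inl rfl⟩
  cases m with
  | zero =>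
    obtain ⟨r, hr⟩ := Fintype.card_eq_one_iff.1 hm
    have hu : (Finset.univ : Finset V) = {r} := by ext x; simp [hr x]
    rw [hu, Finset.sum_singleton] at hsum
    apply hno' r
    simp only [Win]
    linarith
  | succ k =>
    have key : ∀ r, ∃ s, G.Adj r s ∧ ¬ Win G w k {r, s} (w r) (w s) := by
      intro r
      by_contra hcon
      push Not at hcon
      refine hno' r ⟨fun h => absurd h (not_le.2 (hpos r).1), fun _ v hv => ?_⟩
      have hadj : G.Adj r v := by
        rcases hv.2 with h | ⟨u, hu, h⟩
        · simp at h
        · rw [Finset.mem_singleton] at hu; exact hu ▸ h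
      rw [zero_add, Finset.pair_comm]
      exact hcon v hadj
    choose f hf1 hf2 using key
    obtain ⟨u, hu⟩ := exists_two_cycle G ht f hf1
    have hne := (hf1 u).ne
    have h1 := hf2 u
    have h2 := hf2 (f u)
    rw [hu, Finset.pair_comm] at h2
    have := win_symm G w hsum hd k {u} {f u} (by simpa using hne) (by simp)
      (by rw [← Finset.insert_eq, Finset.card_pair hne]; omega)
    simp only [Finset.sum_singleton, ← Finset.insert_eq] at this
    exact h2 (this h1)

open Classical in
theorem slegal_iff {V : Type} (G : SimpleGraph V) (h : List V) (v : V) :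
    SLegal G h.toFinset v ↔ LegalMove G h v := by
  simp [SLegal, LegalMove]

open Classical in
theorem exists_legal {V : Type} [Fintype V] (G : SimpleGraph V) (hc : G.Connected) (h : List V)
    (hlen : h.length < Fintype.card V) : ∃ v, LegalMove G h v := by
  haveI := hc.nonempty
  by_cases hh : h = []
  · exact ⟨Classical.arbitrary V, by simp [hh], Or.inl hh⟩
  obtain ⟨x, hx⟩ : ∃ x, x ∉ h := by
    by_contra hall
    push Not at hall
    have : h.toFinset = Finset.univ := by ext x; simp [hall x]
    have h2 := h.toFinset_card_le
    rw [this, Finset.card_univ] at h2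
    omega
  obtain ⟨y, hy⟩ := List.exists_mem_of_ne_nil h hh
  obtain ⟨p⟩ := hc.preconnected y x
  obtain ⟨d, _, hd1, hd2⟩ := p.exists_boundary_dart {z | z ∈ h} hy hx
  exact ⟨d.snd, hd2, Or.inr ⟨d.fst, hd1, d.adj⟩⟩

theorem playAux_length {V : Type} [Fintype V] (w : V → ℝ) (σ τ : List V → V) (n : ℕ) :
    (playAux w σ τ n).length = n := by
  induction n with
  | zero => rfl
  | succ n ih => simp [playAux, ih]

theorem scores_bound {V : Type} [Fintype V] (w : V → ℝ) (hw : ∀ v, 0 < w v ∧ w v ≤ 1)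
    (h : List V) : (scores w h).1 ≤ h.length := by
  induction h with
  | nil => simp [scores]
  | cons v h ih =>
    have := hw v
    simp only [scores, List.length_cons, Nat.cast_add, Nat.cast_one]
    split_ifs <;> simp only <;> linarith

open Classical in
theorem exists_strategy {V : Type} [Fintype V] [Nonempty V] (G : SimpleGraph V) (w : V → ℝ) :
    ∃ σ : List V → V, LegalStrategy G σ ∧ ∀ (h : List V) (n : ℕ),
      h.length + (n + 1) = Fintype.card V →
      (∃ v, LegalMove G h v ∧
        Win G w n (insert v h.toFinset) ((scores w h).1 + w v) (scores w h).2) →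
      LegalMove G h (σ h) ∧
        Win G w n (insert (σ h) h.toFinset) ((scores w h).1 + w (σ h)) (scores w h).2 := by
  have : ∀ h : List V, ∃ x : V, ((∃ v, LegalMove G h v) → LegalMove G h x) ∧ ∀ (n : ℕ),
      h.length + (n + 1) = Fintype.card V →
      (∃ v, LegalMove G h v ∧
        Win G w n (insert v h.toFinset) ((scores w h).1 + w v) (scores w h).2) →
      LegalMove G h x ∧
        Win G w n (insert x h.toFinset) ((scores w h).1 + w x) (scores w h).2 := by
    intro h
    by_cases hc : ∃ n v, h.length + (n + 1) = Fintype.card V ∧ LegalMove G h v ∧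
        Win G w n (insert v h.toFinset) ((scores w h).1 + w v) (scores w h).2
    · obtain ⟨n, v, h1, h2, h3⟩ := hc
      refine ⟨v, fun _ => h2, fun n' hn' _ => ?_⟩
      obtain rfl : n' = n := by omega
      exact ⟨h2, h3⟩
    · by_cases hl : ∃ v, LegalMove G h v
      · obtain ⟨v, hv⟩ := hl
        refine ⟨v, fun _ => hv, fun n hn ⟨x, hx⟩ => absurd ⟨n, x, hn, hx⟩ hc⟩
      · exact ⟨Classical.arbitrary V, fun h => absurd h hl,
          fun n hn ⟨x, hx⟩ => absurd ⟨n, x, hn, hx⟩ hc⟩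
  choose σ h1 h2 using this
  exact ⟨σ, h1, h2⟩

open Classical in
theorem first_guarantees {V : Type} [Fintype V] (G : SimpleGraph V) (w : V → ℝ)
    (hG : IsGameInstance G w) (ht : G.IsTree) : FirstGuarantees G w (1 / 2) := by
  have hconn := hG.1
  haveI := hconn.nonempty
  obtain ⟨σ, hσ, hwin⟩ := exists_strategy G w
  refine ⟨σ, hσ, fun τ hτ => ?_⟩
  have inv : ∀ n m, n + m = Fintype.card V →
      Win G w m (playAux w σ τ n).toFinset (scores w (playAux w σ τ n)).1
        (scores w (playAux w σ τ n)).2 := by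
    intro n
    induction n with
    | zero =>
      intro m hm
      obtain rfl : m = Fintype.card V := by omega
      simpa [playAux, scores] using win_start G w hG ht
    | succ n ih =>
      intro m hm
      have hI := ih (m + 1) (by omega)
      have hlen := playAux_length w σ τ n
      have hleg := exists_legal G hconn (playAux w σ τ n) (by omega)
      simp only [playAux]
      generalize playAux w σ τ n = h at *
      by_cases hle : (scores w h).1 ≤ (scores w h).2
      · obtain ⟨v, hv, hv2⟩ := hI.1 hle
        have := hwin h m (by omega) ⟨v, (slegal_iff G h v).1 hv, hv2⟩
        simpa [scores, hle] using this.2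
      · have := hI.2 hle (τ h) ((slegal_iff G h _).2 (hτ h hleg))
        simpa [scores, hle] using this
  exact inv (Fintype.card V) 0 rfl

end ConcurrentSharing

open ConcurrentSharing in
/-- For every instance `(G,w)` of the concurrent graph
sharing game in which `G` is a tree, the first player can guarantee to take
vertices of total weight at least `1/2`; that is, `v(G,w) ≥ 1/2`. -/
theorem tree_first_player_guarantees_one_half {V : Type} [Fintype V]
    (G : SimpleGraph V) (w : V → ℝ) (hGw : IsGameInstance G w)
    (htree : G.IsTree) :
    FirstGuarantees G w (1 / 2) ∧ 1 / 2 ≤ gameValue G w := by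
  have h := first_guarantees G w hGw htree
  refine ⟨h, le_csSup ⟨(Fintype.card V : ℝ), ?_⟩ h⟩
  rintro c ⟨σ, hσ, hc⟩
  refine (hc σ hσ).trans ((scores_bound w hGw.2.1 _).trans ?_)
  rw [playAux_length]
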